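/- arXiv:1903.08086 — 7 statements merged into one kernel-verified Lean document; each statement's English description precedes it below -/
import Mathlib

section
/- Let L > 0 and Ω = (0,L) × (0,∞). Let ū, v̄, v be five times continuously differentiable on Ω with all these derivatives continuous in the closure variables as needed to interchange ∂_y with integration in x, assume ū > 0 on Ω and ∂_x ū + ∂_y v̄ = 0 on Ω, and let u⁰ : (0,∞) → ℝ be twice continuously differentiable. Define u(x,y) := u⁰(y) − ∫₀ˣ ∂_y v(x',y) dx' (so that ∂_x u + ∂_y v = 0 and u(0,·) = u⁰), q := v/ū, I_x[f](x,y) := ∫₀ˣ f(x',y) dx', Λ(v) := v̄_xyy·I_x[v_y] + v̄_yy·v_y − v̄_x·I_x[v_yyy] − v̄·v_yyy, and U(u⁰) := −v̄_xyy·u⁰ + v̄_x·∂_y²u⁰. Then on Ω one has the identity −∂_x∂_y(ū²·∂_y q) + ∂_y⁴ v + Λ(v) + U(u⁰) = ∂_x∂_y( ū·u_x + u·ū_x + v̄·u_y + v·ū_y − u_yy ). In particular, if (u,v) solves the linearized Prandtl equation ū u_x + u ū_x + v̄ u_y + v ū_y − u_yy = g₁, then q solves the linear Derivative Prandtl Equation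 −∂_x∂_y(ū² q_y) + ∂_y⁴ v + Λ(v) + U(u⁰) = ∂_x∂_y g₁. -/
/-!
Write `I` for integration in `x` from `0`. Interchanging `∂_y` with `I` and the fundamental theorem
of calculus give, on `Ω`,
`u_x = -v_y`, `u_y = ∂_y u0 - I v_yy`, `u_yy = ∂_y² u0 - I v_yyy`, `∂_x u_y = -v_yy`, `∂_x u_yy = -v_yyy`.
Hence the `x`-derivative of the linearized Prandtl operator,
`-2 ū_x v_y - ū v_xy + u ū_xx + v̄_x u_y - v̄ v_yy + v_x ū_y + v ū_xy + v_yyy`,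
no longer involves `∂_y² u0`, so it can be differentiated in `y` although `u0` is only `C²`.
On the other side `ū² q_y = ū v_y - v ū_y`. After expanding both sides, the identity
follows from `ū_x = -v̄_y` and the symmetry of second derivatives: the terms `ū_xx u_y` and
`v̄_xy u_y` cancel, and `ū_xxy = -v̄_xyy`.

The two partial derivatives are handled through slices: a `C^{n+1}` function on an open set has
`C^n` partial derivatives `pdx f`, `pdy f` (`contDiffOn_pdx`, `contDiffOn_pdy`), which commute when
`f` is `C²` (`pdx_pdy_comm`), and which only depend on `f` near the point (`pdx_congr`,
`pdy_congr`).
-/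

open Set MeasureTheory

/-- Partial derivative in the first (`x`) variable. -/
noncomputable def pdx (f : ℝ × ℝ → ℝ) (p : ℝ × ℝ) : ℝ := deriv (fun x => f (x, p.2)) p.1

/-- Partial derivative in the second (`y`) variable. -/
noncomputable def pdy (f : ℝ × ℝ → ℝ) (p : ℝ × ℝ) : ℝ := deriv (fun y => f (p.1, y)) p.2

/-- Antiderivative in `x` from `0`: `I_x[f](x,y) = ∫₀ˣ f(x',y) dx'`. -/
noncomputable def intX (f : ℝ × ℝ → ℝ) (p : ℝ × ℝ) : ℝ := ∫ t in (0:ℝ)..p.1, f (t, p.2)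

lemma hasDerivAt_slice_x {f : ℝ × ℝ → ℝ} {p : ℝ × ℝ} (hf : DifferentiableAt ℝ f p) :
    HasDerivAt (fun x => f (x, p.2)) (fderiv ℝ f p (1, 0)) p.1 :=
  HasFDerivAt.comp_hasDerivAt (f := fun x : ℝ => (x, p.2)) p.1 hf.hasFDerivAt
    ((hasDerivAt_id p.1).prodMk (hasDerivAt_const p.1 p.2))

lemma hasDerivAt_slice_y {f : ℝ × ℝ → ℝ} {p : ℝ × ℝ} (hf : DifferentiableAt ℝ f p) :
    HasDerivAt (fun y => f (p.1, y)) (fderiv ℝ f p (0, 1)) p.2 :=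
  HasFDerivAt.comp_hasDerivAt (f := fun y : ℝ => (p.1, y)) p.2 hf.hasFDerivAt
    ((hasDerivAt_const p.2 p.1).prodMk (hasDerivAt_id p.2))

lemma hasDerivAt_pdx {Ω : Set (ℝ × ℝ)} (hΩ : IsOpen Ω) {f : ℝ × ℝ → ℝ} {n : ℕ}
    (hf : ContDiffOn ℝ (n + 1 : ℕ) f Ω) {p : ℝ × ℝ} (hp : p ∈ Ω) :
    HasDerivAt (fun x => f (x, p.2)) (pdx f p) p.1 :=
  (hasDerivAt_slice_x ((hf.contDiffAt (hΩ.mem_nhds hp)).differentiableAt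
    (by exact_mod_cast n.succ_ne_zero))).differentiableAt.hasDerivAt

lemma hasDerivAt_pdy {Ω : Set (ℝ × ℝ)} (hΩ : IsOpen Ω) {f : ℝ × ℝ → ℝ} {n : ℕ}
    (hf : ContDiffOn ℝ (n + 1 : ℕ) f Ω) {p : ℝ × ℝ} (hp : p ∈ Ω) :
    HasDerivAt (fun y => f (p.1, y)) (pdy f p) p.2 :=
  (hasDerivAt_slice_y ((hf.contDiffAt (hΩ.mem_nhds hp)).differentiableAt
    (by exact_mod_cast n.succ_ne_zero))).differentiableAt.hasDerivAt

lemma pdx_eq_fderiv {Ω : Set (ℝ × ℝ)} (hΩ : IsOpen Ω) {f : ℝ × ℝ → ℝ} {n : ℕ}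
    (hf : ContDiffOn ℝ (n + 1 : ℕ) f Ω) {p : ℝ × ℝ} (hp : p ∈ Ω) :
    pdx f p = fderiv ℝ f p (1, 0) :=
  (hasDerivAt_slice_x ((hf.contDiffAt (hΩ.mem_nhds hp)).differentiableAt
    (by exact_mod_cast n.succ_ne_zero))).deriv

lemma pdy_eq_fderiv {Ω : Set (ℝ × ℝ)} (hΩ : IsOpen Ω) {f : ℝ × ℝ → ℝ} {n : ℕ}
    (hf : ContDiffOn ℝ (n + 1 : ℕ) f Ω) {p : ℝ × ℝ} (hp : p ∈ Ω) :
    pdy f p = fderiv ℝ f p (0, 1) :=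
  (hasDerivAt_slice_y ((hf.contDiffAt (hΩ.mem_nhds hp)).differentiableAt
    (by exact_mod_cast n.succ_ne_zero))).deriv

lemma contDiffOn_pdx {Ω : Set (ℝ × ℝ)} (hΩ : IsOpen Ω) {f : ℝ × ℝ → ℝ} {n : ℕ}
    (hf : ContDiffOn ℝ (n + 1 : ℕ) f Ω) : ContDiffOn ℝ n (pdx f) Ω :=
  ((hf.fderiv_of_isOpen (m := n) hΩ (by exact_mod_cast le_rfl)).clm_apply
    contDiffOn_const).congr fun _ hp => pdx_eq_fderiv hΩ hf hp

lemma contDiffOn_pdy {Ω : Set (ℝ × ℝ)} (hΩ : IsOpen Ω) {f : ℝ × ℝ → ℝ} {n : ℕ}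
    (hf : ContDiffOn ℝ (n + 1 : ℕ) f Ω) : ContDiffOn ℝ n (pdy f) Ω :=
  ((hf.fderiv_of_isOpen (m := n) hΩ (by exact_mod_cast le_rfl)).clm_apply
    contDiffOn_const).congr fun _ hp => pdy_eq_fderiv hΩ hf hp

lemma eventually_slice_x {Ω : Set (ℝ × ℝ)} (hΩ : IsOpen Ω) {p : ℝ × ℝ} (hp : p ∈ Ω) :
    ∀ᶠ x in nhds p.1, (x, p.2) ∈ Ω :=
  (Continuous.prodMk_left p.2).continuousAt.eventually (hΩ.mem_nhds hp)

lemma eventually_slice_y {Ω : Set (ℝ × ℝ)} (hΩ : IsOpen Ω) {p : ℝ × ℝ} (hp : p ∈ Ω) :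
    ∀ᶠ y in nhds p.2, (p.1, y) ∈ Ω :=
  (Continuous.prodMk_right p.1).continuousAt.eventually (hΩ.mem_nhds hp)

lemma pdx_congr {Ω : Set (ℝ × ℝ)} (hΩ : IsOpen Ω) {f g : ℝ × ℝ → ℝ}
    (h : ∀ p ∈ Ω, f p = g p) : ∀ p ∈ Ω, pdx f p = pdx g p := fun _ hp =>
  Filter.EventuallyEq.deriv_eq ((eventually_slice_x hΩ hp).mono fun _ hx => h _ hx)

lemma pdy_congr {Ω : Set (ℝ × ℝ)} (hΩ : IsOpen Ω) {f g : ℝ × ℝ → ℝ}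
    (h : ∀ p ∈ Ω, f p = g p) : ∀ p ∈ Ω, pdy f p = pdy g p := fun _ hp =>
  Filter.EventuallyEq.deriv_eq ((eventually_slice_y hΩ hp).mono fun _ hy => h _ hy)

lemma pdx_pdy_comm {Ω : Set (ℝ × ℝ)} (hΩ : IsOpen Ω) {f : ℝ × ℝ → ℝ} {n : ℕ}
    (hf : ContDiffOn ℝ (n + 2 : ℕ) f Ω) {p : ℝ × ℝ} (hp : p ∈ Ω) :
    pdx (pdy f) p = pdy (pdx f) p := by
  have hc : ContDiffAt ℝ (n + 2 : ℕ) f p := hf.contDiffAt (hΩ.mem_nhds hp)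
  have hd : DifferentiableAt ℝ (fderiv ℝ f) p :=
    (hc.fderiv_right (m := 1) (by norm_cast; omega)).differentiableAt one_ne_zero
  have hsymm : IsSymmSndFDerivAt ℝ f p :=
    hc.isSymmSndFDerivAt (by simp only [minSmoothness_of_isRCLikeNormedField]; norm_cast; omega)
  rw [pdx_congr hΩ (fun r hr => pdy_eq_fderiv hΩ (n := n + 1) hf hr) p hp,
    pdy_congr hΩ (fun r hr => pdx_eq_fderiv hΩ (n := n + 1) hf hr) p hp]
  have h1 := hasDerivAt_slice_x (hd.clm_apply (differentiableAt_const ((0 : ℝ), (1 : ℝ))))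
  have h2 := hasDerivAt_slice_y (hd.clm_apply (differentiableAt_const ((1 : ℝ), (0 : ℝ))))
  refine h1.deriv.trans (Eq.trans ?_ h2.deriv.symm)
  rw [fderiv_clm_apply hd (differentiableAt_const _),
    fderiv_clm_apply hd (differentiableAt_const _)]
  simpa using hsymm.eq (1, 0) (0, 1)

/-- Fundamental theorem of calculus for `intX`. Continuity is only available in the open set, so
integrability up to `x = 0` is a separate hypothesis. -/
lemma hasDerivAt_intX {Ω : Set (ℝ × ℝ)} (hΩ : IsOpen Ω) {w : ℝ × ℝ → ℝ}
    (hw : ContinuousOn w Ω) {p : ℝ × ℝ} (hp : p ∈ Ω)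
    (hi : IntervalIntegrable (fun t => w (t, p.2)) volume 0 p.1) :
    HasDerivAt (fun x => intX w (x, p.2)) (w p) p.1 := by
  have hcont : Continuous fun x : ℝ => (x, p.2) := Continuous.prodMk_left p.2
  have hc : ContinuousOn (fun t => w (t, p.2)) ((fun x : ℝ => (x, p.2)) ⁻¹' Ω) :=
    hw.comp hcont.continuousOn fun _ h => h
  have ho : IsOpen ((fun x : ℝ => (x, p.2)) ⁻¹' Ω) := hΩ.preimage hcont
  exact intervalIntegral.integral_hasDerivAt_right hi
    (hc.stronglyMeasurableAtFilter ho p.1 hp) (hc.continuousAt (ho.mem_nhds hp))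

/-- Derivation of the linear Derivative Prandtl Equation (LDP): with
`u(x,y) = u⁰(y) − ∫₀ˣ v_y`, `q = v/ū`,
`Λ(v) = v̄_xyy I_x[v_y] + v̄_yy v_y − v̄_x I_x[v_yyy] − v̄ v_yyy`, and
`U(u⁰) = −v̄_xyy u⁰ + v̄_x u⁰_yy`, one has
`−∂_x∂_y(ū² q_y) + ∂_y⁴ v + Λ(v) + U(u⁰) = ∂_x∂_y(ū u_x + u ū_x + v̄ u_y + v ū_y − u_yy)`
on `Ω = (0,L) × (0,∞)`; in particular if the linearized Prandtl equation with datum `g₁`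
holds then `q` solves `−∂_x∂_y(ū² q_y) + ∂_y⁴ v + Λ(v) + U(u⁰) = ∂_x∂_y g₁`. -/
theorem LDP_derivation (L : ℝ) (hL : 0 < L) (ub vb v : ℝ × ℝ → ℝ) (u0 : ℝ → ℝ)
    (hub : ContDiffOn ℝ 5 ub (Ioo 0 L ×ˢ Ioi 0))
    (hvb : ContDiffOn ℝ 5 vb (Ioo 0 L ×ˢ Ioi 0))
    (hv : ContDiffOn ℝ 5 v (Ioo 0 L ×ˢ Ioi 0))
    (hu0 : ContDiffOn ℝ 2 u0 (Ioi 0))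
    (hpos : ∀ p ∈ Ioo 0 L ×ˢ Ioi (0:ℝ), 0 < ub p)
    (hdivb : ∀ p ∈ Ioo 0 L ×ˢ Ioi (0:ℝ), pdx ub p + pdy vb p = 0)
    -- continuity/integrability in the closure variable needed to make sense of `I_x`
    (hint : ∀ k : ℕ, 1 ≤ k → k ≤ 3 → ∀ p ∈ Ioo 0 L ×ˢ Ioi (0:ℝ),
      IntervalIntegrable (fun t => (pdy^[k] v) (t, p.2)) volume 0 p.1)
    -- one may interchange `∂_y` with the integration in `x`
    (hswap : ∀ k : ℕ, 1 ≤ k → k ≤ 3 → ∀ p ∈ Ioo 0 L ×ˢ Ioi (0:ℝ),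
      HasDerivAt (fun y => ∫ t in (0:ℝ)..p.1, (pdy^[k] v) (t, y))
        (∫ t in (0:ℝ)..p.1, (pdy^[k + 1] v) (t, p.2)) p.2) :
    let u : ℝ × ℝ → ℝ := fun p => u0 p.2 - intX (pdy v) p
    let q : ℝ × ℝ → ℝ := fun p => v p / ub p
    let Lam : ℝ × ℝ → ℝ := fun p =>
      pdy (pdy (pdx vb)) p * intX (pdy v) p + pdy (pdy vb) p * pdy v p
        - pdx vb p * intX (pdy (pdy (pdy v))) p - vb p * pdy (pdy (pdy v)) p
    let Uop : ℝ × ℝ → ℝ := fun p =>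
      -(pdy (pdy (pdx vb)) p) * u0 p.2 + pdx vb p * deriv (deriv u0) p.2
    (∀ p ∈ Ioo 0 L ×ˢ Ioi (0:ℝ),
      -(pdy (pdx (fun r => (ub r) ^ 2 * pdy q r)) p) + pdy (pdy (pdy (pdy v))) p
          + Lam p + Uop p
        = pdy (pdx (fun r =>
            ub r * pdx u r + u r * pdx ub r + vb r * pdy u r + v r * pdy ub r
              - pdy (pdy u) r)) p) ∧
    (∀ g1 : ℝ × ℝ → ℝ,
      (∀ p ∈ Ioo 0 L ×ˢ Ioi (0:ℝ),
        ub p * pdx u p + u p * pdx ub p + vb p * pdy u p + v p * pdy ub p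
          - pdy (pdy u) p = g1 p) →
      ∀ p ∈ Ioo 0 L ×ˢ Ioi (0:ℝ),
        -(pdy (pdx (fun r => (ub r) ^ 2 * pdy q r)) p) + pdy (pdy (pdy (pdy v))) p
            + Lam p + Uop p = pdy (pdx g1) p) := by
  intro u q Lam Uop
  set Ω : Set (ℝ × ℝ) := Ioo 0 L ×ˢ Ioi 0 with hΩdef
  have hΩ : IsOpen Ω := isOpen_Ioo.prod isOpen_Ioi
  have hub5 : ContDiffOn ℝ (4 + 1 : ℕ) ub Ω := hub
  have hvb5 : ContDiffOn ℝ (4 + 1 : ℕ) vb Ω := hvb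
  have hv5 : ContDiffOn ℝ (4 + 1 : ℕ) v Ω := hv
  have hvx : ContDiffOn ℝ (3 + 1 : ℕ) (pdx v) Ω := contDiffOn_pdx hΩ hv5
  have hvy : ContDiffOn ℝ (3 + 1 : ℕ) (pdy v) Ω := contDiffOn_pdy hΩ hv5
  have hvyx : ContDiffOn ℝ (2 + 1 : ℕ) (pdx (pdy v)) Ω := contDiffOn_pdx hΩ hvy
  have hvyy : ContDiffOn ℝ (2 + 1 : ℕ) (pdy (pdy v)) Ω := contDiffOn_pdy hΩ hvy
  have hvyyy : ContDiffOn ℝ (1 + 1 : ℕ) (pdy (pdy (pdy v))) Ω := contDiffOn_pdy hΩ hvyy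
  have hubx : ContDiffOn ℝ (3 + 1 : ℕ) (pdx ub) Ω := contDiffOn_pdx hΩ hub5
  have huby : ContDiffOn ℝ (3 + 1 : ℕ) (pdy ub) Ω := contDiffOn_pdy hΩ hub5
  have hubxx : ContDiffOn ℝ (2 + 1 : ℕ) (pdx (pdx ub)) Ω := contDiffOn_pdx hΩ hubx
  have hubyx : ContDiffOn ℝ (2 + 1 : ℕ) (pdx (pdy ub)) Ω := contDiffOn_pdx hΩ huby
  have hvbx : ContDiffOn ℝ (3 + 1 : ℕ) (pdx vb) Ω := contDiffOn_pdx hΩ hvb5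
  -- `u_y` and `u_yy` in closed form
  let u1 : ℝ × ℝ → ℝ := fun p => deriv u0 p.2 - intX (pdy (pdy v)) p
  let u2 : ℝ × ℝ → ℝ := fun p => deriv (deriv u0) p.2 - intX (pdy (pdy (pdy v))) p
  have hu0d : ∀ p ∈ Ω, HasDerivAt u0 (deriv u0 p.2) p.2 := fun p hp =>
    ((hu0.contDiffAt (isOpen_Ioi.mem_nhds hp.2)).differentiableAt two_ne_zero).hasDerivAt
  have hu0dd : ∀ p ∈ Ω, HasDerivAt (deriv u0) (deriv (deriv u0) p.2) p.2 := fun p hp =>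
    (((hu0.deriv_of_isOpen (m := 1) isOpen_Ioi (by norm_num)).contDiffAt
      (isOpen_Ioi.mem_nhds hp.2)).differentiableAt one_ne_zero).hasDerivAt
  have u_y : ∀ p ∈ Ω, HasDerivAt (fun y => u (p.1, y)) (u1 p) p.2 := fun p hp =>
    (hu0d p hp).fun_sub (hswap 1 le_rfl (by norm_num) p hp)
  have u1_y : ∀ p ∈ Ω, HasDerivAt (fun y => u1 (p.1, y)) (u2 p) p.2 := fun p hp =>
    (hu0dd p hp).fun_sub (hswap 2 (by norm_num) (by norm_num) p hp)
  have u_x : ∀ p ∈ Ω, HasDerivAt (fun x => u (x, p.2)) (-pdy v p) p.1 := fun p hp =>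
    (hasDerivAt_intX hΩ hvy.continuousOn hp
      (hint 1 le_rfl (by norm_num) p hp)).const_sub (u0 p.2)
  have u1_x : ∀ p ∈ Ω, HasDerivAt (fun x => u1 (x, p.2)) (-pdy (pdy v) p) p.1 := fun p hp =>
    (hasDerivAt_intX hΩ hvyy.continuousOn hp
      (hint 2 (by norm_num) (by norm_num) p hp)).const_sub (deriv u0 p.2)
  have u2_x : ∀ p ∈ Ω, HasDerivAt (fun x => u2 (x, p.2)) (-pdy (pdy (pdy v)) p) p.1 :=
    fun p hp => (hasDerivAt_intX hΩ hvyyy.continuousOn hp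
      (hint 3 (by norm_num) le_rfl p hp)).const_sub (deriv (deriv u0) p.2)
  have e_uy : ∀ p ∈ Ω, pdy u p = u1 p := fun p hp => (u_y p hp).deriv
  have e_uyy : ∀ p ∈ Ω, pdy (pdy u) p = u2 p := fun p hp =>
    (pdy_congr hΩ e_uy p hp).trans (u1_y p hp).deriv
  have e_ux : ∀ p ∈ Ω, pdx u p = -pdy v p := fun p hp => (u_x p hp).deriv
  -- consequences of the divergence-free condition
  have e_ubx : ∀ p ∈ Ω, pdx ub p = -pdy vb p := fun p hp =>
    eq_neg_of_add_eq_zero_left (hdivb p hp)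
  have e_ubxy : ∀ p ∈ Ω, pdy (pdx ub) p = -pdy (pdy vb) p := fun p hp =>
    (pdy_congr hΩ e_ubx p hp).trans
      (hasDerivAt_pdy hΩ (n := 3) (contDiffOn_pdy hΩ hvb5) hp).fun_neg.deriv
  have e_ubxx : ∀ p ∈ Ω, pdx (pdx ub) p = -pdy (pdx vb) p := fun p hp =>
    ((pdx_congr hΩ e_ubx p hp).trans
      (hasDerivAt_pdx hΩ (n := 3) (contDiffOn_pdy hΩ hvb5) hp).fun_neg.deriv).trans
      (congrArg Neg.neg (pdx_pdy_comm hΩ (n := 3) hvb5 hp))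
  have e_ubxxy : ∀ p ∈ Ω, pdy (pdx (pdx ub)) p = -pdy (pdy (pdx vb)) p := fun p hp =>
    (pdy_congr hΩ e_ubxx p hp).trans
      (hasDerivAt_pdy hΩ (n := 2) (contDiffOn_pdy hΩ hvbx) hp).fun_neg.deriv
  have e_q : ∀ p ∈ Ω, (ub p) ^ 2 * pdy q p = ub p * pdy v p - v p * pdy ub p := by
    intro p hp
    have hne : ub p ≠ 0 := (hpos p hp).ne'
    have h : pdy q p = (pdy v p * ub p - v p * pdy ub p) / (ub p) ^ 2 :=
      ((hasDerivAt_pdy hΩ hv5 hp).fun_div (hasDerivAt_pdy hΩ hub5 hp) hne).deriv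
    rw [h]
    field_simp
  have e_qx : ∀ p ∈ Ω, pdx (fun r => (ub r) ^ 2 * pdy q r) p =
      (pdx ub p * pdy v p + ub p * pdx (pdy v) p)
        - (pdx v p * pdy ub p + v p * pdx (pdy ub) p) := fun p hp =>
    (pdx_congr hΩ e_q p hp).trans
      (((hasDerivAt_pdx hΩ hub5 hp).fun_mul (hasDerivAt_pdx hΩ hvy hp)).fun_sub
        ((hasDerivAt_pdx hΩ hv5 hp).fun_mul (hasDerivAt_pdx hΩ huby hp))).deriv
  have e_qxy : ∀ p ∈ Ω, pdy (pdx (fun r => (ub r) ^ 2 * pdy q r)) p =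
      ((pdy (pdx ub) p * pdy v p + pdx ub p * pdy (pdy v) p)
        + (pdy ub p * pdx (pdy v) p + ub p * pdy (pdx (pdy v)) p))
      - ((pdy (pdx v) p * pdy ub p + pdx v p * pdy (pdy ub) p)
        + (pdy v p * pdx (pdy ub) p + v p * pdy (pdx (pdy ub)) p)) := fun p hp =>
    (pdy_congr hΩ e_qx p hp).trans
      ((((hasDerivAt_pdy hΩ hubx hp).fun_mul (hasDerivAt_pdy hΩ hvy hp)).fun_add
        ((hasDerivAt_pdy hΩ hub5 hp).fun_mul (hasDerivAt_pdy hΩ hvyx hp))).fun_sub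
      (((hasDerivAt_pdy hΩ hvx hp).fun_mul (hasDerivAt_pdy hΩ huby hp)).fun_add
        ((hasDerivAt_pdy hΩ hv5 hp).fun_mul (hasDerivAt_pdy hΩ hubyx hp)))).deriv
  let F : ℝ × ℝ → ℝ := fun r =>
    ub r * pdx u r + u r * pdx ub r + vb r * pdy u r + v r * pdy ub r - pdy (pdy u) r
  have e_F : ∀ p ∈ Ω, F p =
      ub p * (-pdy v p) + u p * pdx ub p + vb p * u1 p + v p * pdy ub p - u2 p := by
    intro p hp
    simp only [F, e_ux p hp, e_uy p hp, e_uyy p hp]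
  have e_Fx : ∀ p ∈ Ω, pdx F p =
      (pdx ub p * (-pdy v p) + ub p * (-pdx (pdy v) p))
      + ((-pdy v p) * pdx ub p + u p * pdx (pdx ub) p)
      + (pdx vb p * u1 p + vb p * (-pdy (pdy v) p))
      + (pdx v p * pdy ub p + v p * pdx (pdy ub) p)
      - (-pdy (pdy (pdy v)) p) := fun p hp =>
    (pdx_congr hΩ e_F p hp).trans
      ((((((hasDerivAt_pdx hΩ hub5 hp).fun_mul (hasDerivAt_pdx hΩ hvy hp).fun_neg).fun_add
        ((u_x p hp).fun_mul (hasDerivAt_pdx hΩ hubx hp))).fun_add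
        ((hasDerivAt_pdx hΩ hvb5 hp).fun_mul (u1_x p hp))).fun_add
        ((hasDerivAt_pdx hΩ hv5 hp).fun_mul (hasDerivAt_pdx hΩ huby hp))).fun_sub
        (u2_x p hp)).deriv
  have e_Fxy : ∀ p ∈ Ω, pdy (pdx F) p =
      ((pdy (pdx ub) p * (-pdy v p) + pdx ub p * (-pdy (pdy v) p))
        + (pdy ub p * (-pdx (pdy v) p) + ub p * (-pdy (pdx (pdy v)) p)))
      + (((-pdy (pdy v) p) * pdx ub p + (-pdy v p) * pdy (pdx ub) p)
        + (u1 p * pdx (pdx ub) p + u p * pdy (pdx (pdx ub)) p))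
      + ((pdy (pdx vb) p * u1 p + pdx vb p * u2 p)
        + (pdy vb p * (-pdy (pdy v) p) + vb p * (-pdy (pdy (pdy v)) p)))
      + ((pdy (pdx v) p * pdy ub p + pdx v p * pdy (pdy ub) p)
        + (pdy v p * pdx (pdy ub) p + v p * pdy (pdx (pdy ub)) p))
      - (-pdy (pdy (pdy (pdy v))) p) := fun p hp =>
    (pdy_congr hΩ e_Fx p hp).trans
      (((((((hasDerivAt_pdy hΩ hubx hp).fun_mul (hasDerivAt_pdy hΩ hvy hp).fun_neg).fun_add
        ((hasDerivAt_pdy hΩ hub5 hp).fun_mul (hasDerivAt_pdy hΩ hvyx hp).fun_neg)).fun_add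
        (((hasDerivAt_pdy hΩ hvy hp).fun_neg.fun_mul (hasDerivAt_pdy hΩ hubx hp)).fun_add
        ((u_y p hp).fun_mul (hasDerivAt_pdy hΩ hubxx hp)))).fun_add
        (((hasDerivAt_pdy hΩ hvbx hp).fun_mul (u1_y p hp)).fun_add
        ((hasDerivAt_pdy hΩ hvb5 hp).fun_mul (hasDerivAt_pdy hΩ hvyy hp).fun_neg))).fun_add
        (((hasDerivAt_pdy hΩ hvx hp).fun_mul (hasDerivAt_pdy hΩ huby hp)).fun_add
        ((hasDerivAt_pdy hΩ hv5 hp).fun_mul (hasDerivAt_pdy hΩ hubyx hp)))).fun_sub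
        (hasDerivAt_pdy hΩ hvyyy hp).fun_neg).deriv
  have main : ∀ p ∈ Ω,
      -(pdy (pdx (fun r => (ub r) ^ 2 * pdy q r)) p) + pdy (pdy (pdy (pdy v))) p
        + Lam p + Uop p = pdy (pdx F) p := by
    intro p hp
    rw [e_qxy p hp, e_Fxy p hp, e_ubxxy p hp, e_ubxx p hp, e_ubxy p hp, e_ubx p hp]
    simp only [Lam, Uop, u, u1, u2]
    ring
  refine ⟨main, fun g1 hg p hp => (main p hp).trans ?_⟩
  exact pdy_congr hΩ (pdx_congr hΩ hg) p hp
end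

section
/- Let v̄ : (0,∞) → ℝ be continuously differentiable and extend continuously to [0,∞), let ū, u : [0,∞) → ℝ be continuously differentiable on [0,∞) and twice continuously differentiable on (0,∞), with ū(0) = 0, −ū'' + v̄ ū' − v̄' ū = 0 on (0,∞), and −u'' + v̄ u' − v̄' u = h on (0,∞) for a continuous function h. Assume exp(−∫₁^y v̄)·(ū(y)u'(y) − u(y)ū'(y)) → 0 as y → ∞, and that the improper integral ∫₀^∞ ū(y)·exp(−∫₁^y v̄(z) dz)·h(y) dy converges. Then ū'(0)·u(0)·exp(∫₀¹ v̄(z) dz) + ∫₀^∞ ū(y)·exp(−∫₁^y v̄(z) dz)·h(y) dy = 0. -/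
/-!
The weighted Wronskian `W(y) = exp(−∫₁ʸ v̄) (ū u' − u ū')` satisfies
`W' = −ū exp(−∫₁ʸ v̄) h` on `(0,∞)` by Lagrange's identity: the exponential is the integrating
factor that cancels the first-order terms, and the `v̄'` terms cancel by antisymmetry. Since
`W(0⁺) = −ū'(0) u(0) exp(∫₀¹ v̄)` and `W(∞) = 0`, integrating over `(0,b)` and letting `b → ∞`
gives the identity.
-/

open MeasureTheory Filter

/-- The exponent of the weight is a primitive of `v̄` on the open half-line. -/
lemma hasDerivAt_primitive {vb : ℝ → ℝ} (hvb : ContinuousOn vb (Set.Ici 0)) {y : ℝ}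
    (hy : 0 < y) : HasDerivAt (fun t => ∫ z in (1:ℝ)..t, vb z) (vb y) y := by
  have hcont : ∀ x, 0 < x → ContinuousAt vb x := fun x hx =>
    hvb.continuousAt (Ici_mem_nhds hx)
  refine intervalIntegral.integral_hasDerivAt_right ?_ ?_ (hcont y hy)
  · refine (hvb.mono fun x hx => ?_).intervalIntegrable
    exact le_trans (le_min zero_le_one hy.le) hx.1
  · exact ContinuousAt.stronglyMeasurableAtFilter isOpen_Ioi (fun x hx => hcont x hx) y hy

lemma tendsto_primitive_zero {vb : ℝ → ℝ} (hvb : ContinuousOn vb (Set.Ici 0)) :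
    Tendsto (fun t => ∫ z in (1:ℝ)..t, vb z) (nhdsWithin 0 (Set.Ioi 0))
      (nhds (∫ z in (1:ℝ)..0, vb z)) := by
  have hint : IntegrableOn vb (Set.uIcc 1 0) :=
    ((hvb.mono fun x hx => by
      rw [Set.uIcc_of_ge zero_le_one] at hx; exact hx.1).integrableOn_compact isCompact_uIcc)
  have h0 := intervalIntegral.continuousOn_primitive_interval (μ := volume) hint 0
    Set.right_mem_uIcc
  refine h0.mono_left ?_
  rw [Set.uIcc_of_ge zero_le_one]
  exact nhdsWithin_le_of_mem (Icc_mem_nhdsGT zero_lt_one)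

lemma hasDerivAt_deriv_of_contDiffOn {f : ℝ → ℝ} (hf : ContDiffOn ℝ 2 f (Set.Ioi 0)) {y : ℝ}
    (hy : 0 < y) : HasDerivAt f (deriv f y) y ∧ HasDerivAt (deriv f) (deriv (deriv f) y) y := by
  have hmem : Set.Ioi (0:ℝ) ∈ nhds y := Ioi_mem_nhds hy
  have h1 : ContDiffOn ℝ 1 (deriv f) (Set.Ioi 0) :=
    hf.deriv_of_isOpen isOpen_Ioi (by norm_num)
  exact ⟨((hf.differentiableOn (by norm_num)).differentiableAt hmem).hasDerivAt,
    ((h1.differentiableOn (by norm_num)).differentiableAt hmem).hasDerivAt⟩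

/-- Necessity of the compatibility integral condition: if `ū(0) = 0`, `ū` solves
`−ū'' + v̄ ū' − v̄' ū = 0`, `u` solves `−u'' + v̄ u' − v̄' u = h` on `(0,∞)` with `u, ū`
continuously differentiable up to `y = 0`, the weighted Wronskian
`e^{−∫₁ʸ v̄}(ū u' − u ū')` tends to `0` at infinity, and the improper integral
`∫₀^∞ ū e^{−∫₁ʸ v̄} h` converges (to `I0`), then
`ū'(0) u(0) exp(∫₀¹ v̄) + I0 = 0`. -/
theorem integral_condition_necessary (vb ub u h : ℝ → ℝ) (dub0 du0 I0 : ℝ)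
    (hvb_cont : ContinuousOn vb (Set.Ici 0))
    (hvb : ContDiffOn ℝ 1 vb (Set.Ioi 0))
    (hub_cont : ContinuousOn ub (Set.Ici 0))
    (hu_cont : ContinuousOn u (Set.Ici 0))
    (hub_diff : ContDiffOn ℝ 2 ub (Set.Ioi 0))
    (hu_diff : ContDiffOn ℝ 2 u (Set.Ioi 0))
    -- `ū, u` are continuously differentiable on `[0,∞)`:
    -- their derivatives extend continuously to `0` with values `dub0`, `du0`
    (hdub0 : Tendsto (deriv ub) (nhdsWithin 0 (Set.Ioi 0)) (nhds dub0))
    (hdu0 : Tendsto (deriv u) (nhdsWithin 0 (Set.Ioi 0)) (nhds du0))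
    (hub0 : ub 0 = 0)
    (hode : ∀ y ∈ Set.Ioi (0:ℝ),
      -(deriv (deriv ub) y) + vb y * deriv ub y - deriv vb y * ub y = 0)
    (hh : ContinuousOn h (Set.Ioi 0))
    (heq : ∀ y ∈ Set.Ioi (0:ℝ),
      -(deriv (deriv u) y) + vb y * deriv u y - deriv vb y * u y = h y)
    (hdecay : Tendsto (fun y => Real.exp (-(∫ z in (1:ℝ)..y, vb z)) *
        (ub y * deriv u y - u y * deriv ub y)) atTop (nhds 0))
    (hloc : ∀ b : ℝ, 0 < b → IntervalIntegrable
      (fun y => ub y * Real.exp (-(∫ z in (1:ℝ)..y, vb z)) * h y) volume 0 b)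
    (hconv : Tendsto (fun b => ∫ y in (0:ℝ)..b,
        ub y * Real.exp (-(∫ z in (1:ℝ)..y, vb z)) * h y) atTop (nhds I0)) :
    dub0 * u 0 * Real.exp (∫ z in (0:ℝ)..1, vb z) + I0 = 0 := by
  -- Lagrange's identity for the weighted Wronskian
  have hW : ∀ y, 0 < y → HasDerivAt (fun y => Real.exp (-(∫ z in (1:ℝ)..y, vb z)) *
      (ub y * deriv u y - u y * deriv ub y))
      (-(ub y * Real.exp (-(∫ z in (1:ℝ)..y, vb z)) * h y)) y := by
    intro y hy
    obtain ⟨hu1, hu2⟩ := hasDerivAt_deriv_of_contDiffOn hu_diff hy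
    obtain ⟨hb1, hb2⟩ := hasDerivAt_deriv_of_contDiffOn hub_diff hy
    have hE := (hasDerivAt_primitive hvb_cont hy).fun_neg.exp
    refine (hE.fun_mul ((hb1.fun_mul hu2).fun_sub (hu1.fun_mul hb2))).congr_deriv ?_
    have e1 := hode y hy
    have e2 := heq y hy
    linear_combination (Real.exp (-(∫ z in (1:ℝ)..y, vb z))) * (u y * e1 - ub y * e2)
  have hub_lim : Tendsto ub (nhdsWithin 0 (Set.Ioi 0)) (nhds (ub 0)) :=
    (hub_cont 0 Set.self_mem_Ici).mono_left (nhdsWithin_mono _ Set.Ioi_subset_Ici_self)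
  have hu_lim : Tendsto u (nhdsWithin 0 (Set.Ioi 0)) (nhds (u 0)) :=
    (hu_cont 0 Set.self_mem_Ici).mono_left (nhdsWithin_mono _ Set.Ioi_subset_Ici_self)
  have hW0 := ((Real.continuous_exp.tendsto _).comp (tendsto_primitive_zero hvb_cont).neg).mul
    ((hub_lim.mul hdu0).sub (hu_lim.mul hdub0))
  have hint : ∀ b : ℝ, 0 < b → _ := fun b hb =>
    intervalIntegral.integral_eq_sub_of_hasDerivAt_of_tendsto hb
      (fun y hy => hW y hy.1) (hloc b hb).neg hW0
      ((hW b hb).continuousAt.tendsto.mono_left nhdsWithin_le_nhds)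
  -- `∫₀ᵇ ū exp(−∫₁ʸ v̄) h + W(b)` is constant in `b`, equal to `W(0⁺)`
  have hlim := hconv.add hdecay
  have hconst := hlim.congr' (f₂ := fun _ => Real.exp (-(∫ z in (1:ℝ)..0, vb z)) *
      (ub 0 * du0 - u 0 * dub0)) (by
    filter_upwards [eventually_gt_atTop 0] with b hb
    have := hint b hb
    rw [intervalIntegral.integral_neg] at this
    linear_combination -this)
  have hI := tendsto_nhds_unique hconst tendsto_const_nhds
  rw [hub0, intervalIntegral.integral_symm, neg_neg] at hI
  linear_combination hI
end

section
/- Let v̄ : (0,∞) → ℝ be twice continuously differentiable, let ū : (0,∞) → ℝ be three times continuously differentiable with ū > 0 and −ū'' + v̄ ū' − v̄' ū = 0 on (0,∞). Define ũ_s(y) := ū(y)·∫₁^y (ū(1)²/ū(z)²)·exp(∫₁^z v̄(w) dw) dz, assume z ↦ ū(z)·exp(−∫₁^z v̄) and z ↦ ũ_s(z)·exp(−∫₁^z v̄) are locally integrable on [0,∞), and set u_R(y) := ũ_s(y)·∫₀^y ū(z)·exp(−∫₁^z v̄) dz − ū(y)·∫₀^y ũ_s(z)·exp(−∫₁^z v̄)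 dz. Then every three times differentiable function u : (0,∞) → ℝ satisfying −u''' + v̄ u'' − v̄'' u = 0 on (0,∞) can be written as u = c₁·ū + c₂·ũ_s + c₃·u_R for some real constants c₁, c₂, c₃. -/
/-!
Since `∂_y (−u'' + v̄ u' − v̄' u) = −u''' + v̄ u'' − v̄'' u`, every `u` in the kernel satisfies
`−u'' + v̄ u' − v̄' u = k` for a constant `k`. Put `E(y) = exp (∫₁ʸ v̄)` and
`A(y) = ∫₀ʸ ū / E`. The weighted Wronskian of `ū` and `u` then satisfies
`((u' ū − u ū') / E)' = −k ū / E`, so it equals `c − k A`, that is,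
`(u / ū)' = (c − k A) E / ū²`. On the other hand `(ũ_s / ū)' = ū(1)² E / ū²` and
`(u_R / ū)' = ū(1)² A E / ū²`. Hence `u / ū − (c / ū(1)²) ũ_s / ū + (k / ū(1)²) u_R / ū` has zero
derivative on `(0,∞)` and is constant. Only first-order integrations occur, so no existence or
uniqueness theory for linear differential equations is needed.
-/

open MeasureTheory

/-- The reduction-of-order companion solution
`ũ_s(y) = ū(y) ∫₁ʸ (ū(1)²/ū(z)²) exp(∫₁ᶻ v̄) dz`. -/
noncomputable def uts (vb ub : ℝ → ℝ) (y : ℝ) : ℝ :=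
  ub y * ∫ z in (1:ℝ)..y, (ub 1) ^ 2 / (ub z) ^ 2 * Real.exp (∫ w in (1:ℝ)..z, vb w)

/-- `u_R(y) = ũ_s(y) ∫₀ʸ ū e^{−∫₁ᶻ v̄} − ū(y) ∫₀ʸ ũ_s e^{−∫₁ᶻ v̄}`. -/
noncomputable def uR (vb ub : ℝ → ℝ) (y : ℝ) : ℝ :=
  uts vb ub y * (∫ z in (0:ℝ)..y, ub z * Real.exp (-(∫ w in (1:ℝ)..z, vb w)))
    - ub y * (∫ z in (0:ℝ)..y, uts vb ub z * Real.exp (-(∫ w in (1:ℝ)..z, vb w)))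

lemma exists_const_of_hasDerivAt_zero {f : ℝ → ℝ}
    (h : ∀ y ∈ Set.Ioi (0:ℝ), HasDerivAt f 0 y) :
    ∃ c, ∀ y ∈ Set.Ioi (0:ℝ), f y = c :=
  isOpen_Ioi.exists_is_const_of_deriv_eq_zero isPreconnected_Ioi
    (fun y hy => (h y hy).differentiableAt.differentiableWithinAt)
    (fun y hy => (h y hy).deriv)

lemma hasDerivAt_integral_Ioi {f : ℝ → ℝ} (hf : ContinuousOn f (Set.Ioi 0)) {a y : ℝ}
    (hy : 0 < y) (hi : IntervalIntegrable f volume a y) :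
    HasDerivAt (fun x => ∫ z in a..x, f z) (f y) y :=
  intervalIntegral.integral_hasDerivAt_right hi
    (hf.stronglyMeasurableAtFilter isOpen_Ioi y hy) (hf.continuousAt (Ioi_mem_nhds hy))

lemma intervalIntegrable_of_continuousOn_Ioi {f : ℝ → ℝ} (hf : ContinuousOn f (Set.Ioi 0))
    {a y : ℝ} (ha : 0 < a) (hy : 0 < y) : IntervalIntegrable f volume a y :=
  (hf.mono fun _ hx => lt_of_lt_of_le (lt_min ha hy) hx.1).intervalIntegrable

lemma intervalIntegrable_of_locallyIntegrableOn_Ici {f : ℝ → ℝ}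
    (hf : LocallyIntegrableOn f (Set.Ici 0) volume) {y : ℝ} (hy : 0 < y) :
    IntervalIntegrable f volume 0 y := by
  refine IntegrableOn.intervalIntegrable ?_
  rw [Set.uIcc_of_le hy.le]
  exact hf.integrableOn_compact_subset (fun _ hx => hx.1) isCompact_Icc

/-- Lemma 2.6: the kernel of the third-order operator
`L∥,y u = −u''' + v̄ u'' − v̄'' u` on `(0,∞)` is spanned by `ū`, `ũ_s`, and `u_R`. -/
theorem kernel_spanned (vb ub : ℝ → ℝ)
    (hvb : ContDiffOn ℝ 2 vb (Set.Ioi 0))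
    (hub : ContDiffOn ℝ 3 ub (Set.Ioi 0))
    (hpos : ∀ y ∈ Set.Ioi (0:ℝ), 0 < ub y)
    (hode : ∀ y ∈ Set.Ioi (0:ℝ),
      -(deriv (deriv ub) y) + vb y * deriv ub y - deriv vb y * ub y = 0)
    (hloc1 : LocallyIntegrableOn
      (fun z => ub z * Real.exp (-(∫ w in (1:ℝ)..z, vb w))) (Set.Ici 0) volume)
    (hloc2 : LocallyIntegrableOn
      (fun z => uts vb ub z * Real.exp (-(∫ w in (1:ℝ)..z, vb w))) (Set.Ici 0) volume) :
    ∀ u : ℝ → ℝ,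
      (∀ y ∈ Set.Ioi (0:ℝ), DifferentiableAt ℝ u y ∧
        DifferentiableAt ℝ (deriv u) y ∧ DifferentiableAt ℝ (deriv (deriv u)) y) →
      (∀ y ∈ Set.Ioi (0:ℝ),
        -(deriv (deriv (deriv u)) y) + vb y * deriv (deriv u) y
          - deriv (deriv vb) y * u y = 0) →
      ∃ c₁ c₂ c₃ : ℝ, ∀ y ∈ Set.Ioi (0:ℝ),
        u y = c₁ * ub y + c₂ * uts vb ub y + c₃ * uR vb ub y := by
  intro u hu hker
  have hv1 : ∀ y ∈ Set.Ioi (0:ℝ), HasDerivAt vb (deriv vb y) y := fun y hy =>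
    ((hvb.differentiableOn (by norm_num)).differentiableAt (Ioi_mem_nhds hy)).hasDerivAt
  have hv2 : ∀ y ∈ Set.Ioi (0:ℝ), HasDerivAt (deriv vb) (deriv (deriv vb) y) y := fun y hy =>
    ((((contDiffOn_succ_iff_deriv_of_isOpen (n := 1) isOpen_Ioi).1
      hvb).2.2.differentiableOn (by norm_num)).differentiableAt (Ioi_mem_nhds hy)).hasDerivAt
  have hb1 : ∀ y ∈ Set.Ioi (0:ℝ), HasDerivAt ub (deriv ub y) y := fun y hy =>
    ((hub.differentiableOn (by norm_num)).differentiableAt (Ioi_mem_nhds hy)).hasDerivAt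
  have hb2 : ∀ y ∈ Set.Ioi (0:ℝ), HasDerivAt (deriv ub) (deriv (deriv ub) y) y := fun y hy =>
    ((((contDiffOn_succ_iff_deriv_of_isOpen (n := 2) isOpen_Ioi).1
      hub).2.2.differentiableOn (by norm_num)).differentiableAt (Ioi_mem_nhds hy)).hasDerivAt
  have hbne : ∀ y ∈ Set.Ioi (0:ℝ), ub y ≠ 0 := fun y hy => (hpos y hy).ne'
  have h1 : (1:ℝ) ∈ Set.Ioi (0:ℝ) := by norm_num
  set V : ℝ → ℝ := fun y => ∫ w in (1:ℝ)..y, vb w with hV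
  have hVd : ∀ y ∈ Set.Ioi (0:ℝ), HasDerivAt V (vb y) y := fun y hy =>
    hasDerivAt_integral_Ioi hvb.continuousOn hy
      (intervalIntegrable_of_continuousOn_Ioi hvb.continuousOn one_pos hy)
  have hVc : ContinuousOn V (Set.Ioi 0) := fun y hy =>
    (hVd y hy).continuousAt.continuousWithinAt
  have hubc : ContinuousOn ub (Set.Ioi 0) := hub.continuousOn
  set I : ℝ → ℝ := fun y => ∫ z in (1:ℝ)..y, (ub 1) ^ 2 / (ub z) ^ 2 * Real.exp (V z) with hI
  have hIc' : ContinuousOn (fun z => (ub 1) ^ 2 / (ub z) ^ 2 * Real.exp (V z)) (Set.Ioi 0) :=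
    (continuousOn_const.div (hubc.pow 2) fun y hy => pow_ne_zero 2 (hbne y hy)).mul
      (Real.continuous_exp.comp_continuousOn hVc)
  have hId : ∀ y ∈ Set.Ioi (0:ℝ),
      HasDerivAt I ((ub 1) ^ 2 / (ub y) ^ 2 * Real.exp (V y)) y := fun y hy =>
    hasDerivAt_integral_Ioi hIc' hy (intervalIntegrable_of_continuousOn_Ioi hIc' one_pos hy)
  have hIc : ContinuousOn I (Set.Ioi 0) := fun y hy =>
    (hId y hy).continuousAt.continuousWithinAt
  have huts : ∀ y, uts vb ub y = ub y * I y := fun y => rfl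
  have hec : ContinuousOn (fun z => Real.exp (-V z)) (Set.Ioi 0) :=
    Real.continuous_exp.comp_continuousOn hVc.neg
  set A : ℝ → ℝ := fun y => ∫ z in (0:ℝ)..y, ub z * Real.exp (-V z) with hA
  have hAd : ∀ y ∈ Set.Ioi (0:ℝ), HasDerivAt A (ub y * Real.exp (-V y)) y := fun y hy =>
    hasDerivAt_integral_Ioi (hubc.mul hec) hy
      (intervalIntegrable_of_locallyIntegrableOn_Ici hloc1 hy)
  set B : ℝ → ℝ := fun y => ∫ z in (0:ℝ)..y, uts vb ub z * Real.exp (-V z) with hB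
  have hBd : ∀ y ∈ Set.Ioi (0:ℝ), HasDerivAt B (ub y * I y * Real.exp (-V y)) y := fun y hy =>
    hasDerivAt_integral_Ioi (f := fun z => uts vb ub z * Real.exp (-V z))
      ((hubc.mul hIc).mul hec) hy
      (intervalIntegrable_of_locallyIntegrableOn_Ici hloc2 hy)
  have huR : ∀ y, uR vb ub y = ub y * I y * A y - ub y * B y := fun y => rfl
  -- The third-order operator is the derivative of the second-order one.
  obtain ⟨k, hk⟩ : ∃ k, ∀ y ∈ Set.Ioi (0:ℝ),
      -(deriv (deriv u) y) + vb y * deriv u y - deriv vb y * u y = k := by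
    refine exists_const_of_hasDerivAt_zero fun y hy => ?_
    obtain ⟨d1, d2, d3⟩ := hu y hy
    refine ((d3.hasDerivAt.neg.add ((hv1 y hy).mul d2.hasDerivAt)).sub
      ((hv2 y hy).mul d1.hasDerivAt)).congr_deriv ?_
    linear_combination hker y hy
  -- The weighted Wronskian of `ū` and `u` is affine in `A`.
  obtain ⟨c, hc⟩ : ∃ c, ∀ y ∈ Set.Ioi (0:ℝ),
      (deriv u y * ub y - u y * deriv ub y) * Real.exp (-V y) + k * A y = c := by
    refine exists_const_of_hasDerivAt_zero fun y hy => ?_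
    obtain ⟨d1, d2, d3⟩ := hu y hy
    refine ((((d2.hasDerivAt.mul (hb1 y hy)).sub (d1.hasDerivAt.mul (hb2 y hy))).mul
      (hVd y hy).neg.exp).add ((hAd y hy).const_mul k)).congr_deriv ?_
    simp only [Pi.mul_apply, Pi.sub_apply, Pi.neg_apply]
    linear_combination Real.exp (-V y) * (u y * hode y hy - ub y * hk y hy)
  obtain ⟨m, hm⟩ : ∃ m, ∀ y ∈ Set.Ioi (0:ℝ),
      u y / ub y - c / ub 1 ^ 2 * I y + k / ub 1 ^ 2 * (I y * A y - B y) = m := by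
    refine exists_const_of_hasDerivAt_zero fun y hy => ?_
    refine ((((hu y hy).1.hasDerivAt.div (hb1 y hy) (hbne y hy)).sub
      ((hId y hy).const_mul (c / ub 1 ^ 2))).add
      ((((hId y hy).mul (hAd y hy)).sub (hBd y hy)).const_mul (k / ub 1 ^ 2))).congr_deriv ?_
    have hb := hbne y hy
    have hb1 := hbne 1 h1
    have hE : Real.exp (-V y) * Real.exp (V y) = 1 := by
      rw [← Real.exp_add, neg_add_cancel, Real.exp_zero]
    have hW : deriv u y * ub y - u y * deriv ub y = (c - k * A y) * Real.exp (V y) := by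
      linear_combination Real.exp (V y) * hc y hy
        - (deriv u y * ub y - u y * deriv ub y) * hE
    rw [hW]
    field_simp
    ring
  refine ⟨m, c / ub 1 ^ 2, -(k / ub 1 ^ 2), fun y hy => ?_⟩
  have hq : u y = u y / ub y * ub y := (div_mul_cancel₀ _ (hbne y hy)).symm
  rw [huts, huR]
  linear_combination hq + ub y * hm y hy
end

section
/- Let ū : [0,1] → ℝ be continuous with ū(0) = 0, ū(y) > 0 for y ∈ (0,1], and lim_{y→0⁺} ū(y)/y = c for some c > 0, and let v̄ : [0,1] → ℝ be continuous. Then lim_{y→0⁺} ū(y)·∫₁^y (ū(1)²/ū(z)²)·exp(∫₁^z v̄(w) dw) dz = −(ū(1)²/c)·exp(−∫₀¹ v̄(w) dw). -/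
open Filter

/-!
Near `0⁺` the integrand `f z = (ū(1)²/ū(z)²) exp(∫₁ᶻ v̄)` behaves like `L / z²`, where
`L = (ū(1)²/c²) exp(∫₁⁰ v̄)`. Since `∫₁ʸ L / z² dz = L - L / y`, this gives `y ∫₁ʸ f → -L`: the
error `f z - L / z²` is at most `ε / z²` on some `(0, δ]`, hence contributes at most `ε` there,
and the part of the integral over `[δ, 1]` is a fixed number, killed by the factor `y`.
Multiplying by `ū(y) / y → c` gives the limit `-c L`.
-/

lemma hasDerivAt_neg_const_div (k x : ℝ) (hx : x ≠ 0) :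
    HasDerivAt (fun z : ℝ => -(k / z)) (k / x ^ 2) x := by
  have h := ((hasDerivAt_inv hx).const_mul k).neg
  refine (h.congr_deriv ?_).congr_of_eventuallyEq (Eventually.of_forall fun z => ?_)
  · field_simp
  · simp [div_eq_mul_inv]

lemma uIcc_subset_Ioc_of_mem {a b : ℝ} (ha : a ∈ Set.Ioc (0:ℝ) 1) (hb : b ∈ Set.Ioc (0:ℝ) 1) :
    Set.uIcc a b ⊆ Set.Ioc (0:ℝ) 1 :=
  Set.ordConnected_Ioc.uIcc_subset ha hb

lemma intervalIntegrable_const_div_sq (k : ℝ) {a b : ℝ} (ha : a ∈ Set.Ioc (0:ℝ) 1)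
    (hb : b ∈ Set.Ioc (0:ℝ) 1) :
    IntervalIntegrable (fun z : ℝ => k / z ^ 2) MeasureTheory.volume a b := by
  refine ContinuousOn.intervalIntegrable ?_
  refine continuousOn_const.div (by fun_prop) fun z hz => ?_
  exact pow_ne_zero 2 (uIcc_subset_Ioc_of_mem ha hb hz).1.ne'

lemma integral_const_div_sq (k : ℝ) {a b : ℝ} (ha : a ∈ Set.Ioc (0:ℝ) 1)
    (hb : b ∈ Set.Ioc (0:ℝ) 1) :
    ∫ z in a..b, k / z ^ 2 = k / a - k / b := by
  rw [intervalIntegral.integral_eq_sub_of_hasDerivAt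
    (fun x hx => hasDerivAt_neg_const_div k x (uIcc_subset_Ioc_of_mem ha hb hx).1.ne')
    (intervalIntegrable_const_div_sq k ha hb)]
  ring

/-- The case `L = 0` of `tendsto_mul_integral`: an integrand that is `o(1 / z²)` at `0⁺` has a
primitive that is `o(1 / y)`. -/
lemma tendsto_mul_integral_zero (f : ℝ → ℝ) (hf : ContinuousOn f (Set.Ioc 0 1))
    (h : Tendsto (fun z => z ^ 2 * f z) (nhdsWithin 0 (Set.Ioi 0)) (nhds 0)) :
    Tendsto (fun y => y * ∫ z in (1:ℝ)..y, f z) (nhdsWithin 0 (Set.Ioi 0)) (nhds 0) := by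
  rw [Metric.tendsto_nhds]
  intro ε hε
  have h1 := (Metric.tendsto_nhds.1 h) (ε / 2) (by positivity)
  obtain ⟨u, hu, hu'⟩ := mem_nhdsGT_iff_exists_Ioo_subset.1 h1
  obtain ⟨δ, hδ0, hδ⟩ := exists_between (lt_min (Set.mem_Ioi.1 hu) one_pos)
  have hδu : δ < u := hδ.trans_le (min_le_left _ _)
  have hδ1 : δ < 1 := hδ.trans_le (min_le_right _ _)
  have hδm : δ ∈ Set.Ioc (0:ℝ) 1 := ⟨hδ0, hδ1.le⟩
  have h1m : (1:ℝ) ∈ Set.Ioc (0:ℝ) 1 := ⟨one_pos, le_rfl⟩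
  have hC : Tendsto (fun y : ℝ => y * ∫ z in (1:ℝ)..δ, f z) (nhdsWithin 0 (Set.Ioi 0))
      (nhds 0) := by
    have : Tendsto (fun y : ℝ => y * ∫ z in (1:ℝ)..δ, f z) (nhds 0)
        (nhds (0 * ∫ z in (1:ℝ)..δ, f z)) := tendsto_id.mul_const _
    rw [zero_mul] at this
    exact this.mono_left nhdsWithin_le_nhds
  filter_upwards [(Metric.tendsto_nhds.1 hC) (ε / 2) (by positivity),
    Ioo_mem_nhdsGT hδ0] with y hy hyδ
  have hym : y ∈ Set.Ioc (0:ℝ) 1 := ⟨hyδ.1, (hyδ.2.trans hδ1).le⟩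
  have hint : ∀ {a b : ℝ}, a ∈ Set.Ioc (0:ℝ) 1 → b ∈ Set.Ioc (0:ℝ) 1 →
      IntervalIntegrable f MeasureTheory.volume a b := fun ha hb =>
    (hf.mono (uIcc_subset_Ioc_of_mem ha hb)).intervalIntegrable
  have hsplit := intervalIntegral.integral_add_adjacent_intervals (hint h1m hδm) (hint hδm hym)
  have hb : ‖∫ z in y..δ, f z‖ ≤ ∫ z in y..δ, (ε / 2) / z ^ 2 := by
    refine intervalIntegral.norm_integral_le_of_norm_le hyδ.2.le
      (Eventually.of_forall fun z hz => ?_) (intervalIntegrable_const_div_sq _ hym hδm)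
    have hz0 : 0 < z := hyδ.1.trans hz.1
    have hlt := hu' ⟨hz0, hz.2.trans_lt hδu⟩
    simp only [Set.mem_ofPred_eq, dist_zero_right, norm_mul, norm_pow,
      Real.norm_of_nonneg hz0.le] at hlt
    rw [le_div_iff₀ (by positivity), mul_comm]
    exact hlt.le
  rw [integral_const_div_sq _ hym hδm] at hb
  rw [dist_zero_right] at hy ⊢
  rw [← hsplit, mul_add, intervalIntegral.integral_symm y δ]
  have hy0 : 0 < y := hyδ.1
  have h2 : ‖y * -∫ z in y..δ, f z‖ ≤ ε / 2 := by
    rw [norm_mul, norm_neg, Real.norm_of_nonneg hy0.le]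
    calc y * ‖∫ z in y..δ, f z‖ ≤ y * (ε / 2 / y) := by
          gcongr
          have : 0 < ε / 2 / δ := by positivity
          linarith
      _ = ε / 2 := by field_simp
  have h3 := norm_add_le (y * ∫ z in (1:ℝ)..δ, f z) (y * -∫ z in y..δ, f z)
  linarith

/-- If `f z ~ L / z²` at `0⁺`, in the sense that `z² f z → L`, then `y ∫₁ʸ f → -L`. -/
lemma tendsto_mul_integral (f : ℝ → ℝ) (L : ℝ) (hf : ContinuousOn f (Set.Ioc 0 1))
    (h : Tendsto (fun z => z ^ 2 * f z) (nhdsWithin 0 (Set.Ioi 0)) (nhds L)) :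
    Tendsto (fun y => y * ∫ z in (1:ℝ)..y, f z) (nhdsWithin 0 (Set.Ioi 0)) (nhds (-L)) := by
  have hg : ContinuousOn (fun z : ℝ => f z - L / z ^ 2) (Set.Ioc 0 1) :=
    hf.sub (continuousOn_const.div (by fun_prop) fun z hz => pow_ne_zero 2 hz.1.ne')
  have hg0 : Tendsto (fun z => z ^ 2 * (f z - L / z ^ 2)) (nhdsWithin 0 (Set.Ioi 0))
      (nhds 0) := by
    have h' := h.sub_const L
    rw [sub_self] at h'
    refine h'.congr' ?_
    filter_upwards [self_mem_nhdsWithin] with z hz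
    have hz' : z ≠ 0 := (Set.mem_Ioi.1 hz).ne'
    field_simp
  have hy : Tendsto (fun y : ℝ => y * L - L) (nhdsWithin 0 (Set.Ioi 0)) (nhds (-L)) := by
    have : Tendsto (fun y : ℝ => y * L - L) (nhds 0) (nhds (0 * L - L)) :=
      (tendsto_id.mul_const _).sub_const _
    rw [zero_mul, zero_sub] at this
    exact this.mono_left nhdsWithin_le_nhds
  have hsum := (tendsto_mul_integral_zero _ hg hg0).add hy
  rw [zero_add] at hsum
  refine hsum.congr' ?_
  filter_upwards [Ioo_mem_nhdsGT (one_pos : (0:ℝ) < 1)] with y hy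
  have hym : y ∈ Set.Ioc (0:ℝ) 1 := ⟨hy.1, hy.2.le⟩
  have h1m : (1:ℝ) ∈ Set.Ioc (0:ℝ) 1 := ⟨one_pos, le_rfl⟩
  have hy0 : y ≠ 0 := hy.1.ne'
  rw [intervalIntegral.integral_sub
    (hf.mono (uIcc_subset_Ioc_of_mem h1m hym)).intervalIntegrable
    (intervalIntegrable_const_div_sq L h1m hym), integral_const_div_sq L h1m hym]
  field_simp
  ring

/-- Boundary asymptotic of `ũ_s` at `y = 0`: if `ū(0) = 0`, `ū > 0` on `(0,1]`,
`ū(y)/y → c > 0` as `y → 0⁺`, and `v̄` is continuous on `[0,1]`, then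
`ū(y) ∫₁ʸ (ū(1)²/ū(z)²) exp(∫₁ᶻ v̄) dz → −(ū(1)²/c) exp(−∫₀¹ v̄)` as `y → 0⁺`. -/
theorem uts_boundary_asymptotic (ub vb : ℝ → ℝ) (c : ℝ) (hc : 0 < c)
    (hub_cont : ContinuousOn ub (Set.Icc 0 1))
    (hub0 : ub 0 = 0)
    (hub_pos : ∀ y ∈ Set.Ioc (0:ℝ) 1, 0 < ub y)
    (hquot : Tendsto (fun y => ub y / y) (nhdsWithin 0 (Set.Ioi 0)) (nhds c))
    (hvb : ContinuousOn vb (Set.Icc 0 1)) :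
    Tendsto
      (fun y => ub y *
        ∫ z in (1:ℝ)..y, (ub 1) ^ 2 / (ub z) ^ 2 * Real.exp (∫ w in (1:ℝ)..z, vb w))
      (nhdsWithin 0 (Set.Ioi 0))
      (nhds (-((ub 1) ^ 2 / c) * Real.exp (-(∫ w in (0:ℝ)..1, vb w)))) := by
  have hE : ContinuousOn (fun z => Real.exp (∫ w in (1:ℝ)..z, vb w)) (Set.Icc 0 1) := by
    have hi : IntervalIntegrable vb MeasureTheory.volume 0 1 :=
      ContinuousOn.intervalIntegrable (by rwa [Set.uIcc_of_le zero_le_one])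
    have := intervalIntegral.continuousOn_primitive_interval' hi
      (Set.right_mem_uIcc (a := (0:ℝ)) (b := 1))
    rw [Set.uIcc_of_le zero_le_one] at this
    exact this.rexp
  have hE0 : Tendsto (fun z => Real.exp (∫ w in (1:ℝ)..z, vb w)) (nhdsWithin 0 (Set.Ioi 0))
      (nhds (Real.exp (-(∫ w in (0:ℝ)..1, vb w)))) := by
    have h0 := hE 0 ⟨le_rfl, zero_le_one⟩
    rw [ContinuousWithinAt, intervalIntegral.integral_symm 0 1] at h0
    refine h0.mono_left ?_
    rw [← nhdsWithin_Ioo_eq_nhdsGT (one_pos : (0:ℝ) < 1)]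
    exact nhdsWithin_mono _ Set.Ioo_subset_Icc_self
  have hf : ContinuousOn
      (fun z => (ub 1) ^ 2 / (ub z) ^ 2 * Real.exp (∫ w in (1:ℝ)..z, vb w)) (Set.Ioc 0 1) :=
    (continuousOn_const.div ((hub_cont.mono Set.Ioc_subset_Icc_self).pow 2)
      fun z hz => pow_ne_zero 2 (hub_pos z hz).ne').mul (hE.mono Set.Ioc_subset_Icc_self)
  have hlim : Tendsto
      (fun z => z ^ 2 * ((ub 1) ^ 2 / (ub z) ^ 2 * Real.exp (∫ w in (1:ℝ)..z, vb w)))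
      (nhdsWithin 0 (Set.Ioi 0))
      (nhds ((ub 1) ^ 2 / c ^ 2 * Real.exp (-(∫ w in (0:ℝ)..1, vb w)))) := by
    refine (((tendsto_const_nhds (x := (ub 1) ^ 2)).div (hquot.pow 2)
      (pow_ne_zero 2 hc.ne')).mul hE0).congr fun z => ?_
    simp only [Pi.div_apply, div_pow, div_div_eq_mul_div]
    ring
  have hfin := hquot.mul (tendsto_mul_integral _ _ hf hlim)
  have hval : c * -((ub 1) ^ 2 / c ^ 2 * Real.exp (-(∫ w in (0:ℝ)..1, vb w))) =
      -((ub 1) ^ 2 / c) * Real.exp (-(∫ w in (0:ℝ)..1, vb w)) := by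
    field_simp
  rw [hval] at hfin
  refine hfin.congr' ?_
  filter_upwards [self_mem_nhdsWithin] with y hy
  rw [← mul_assoc, div_mul_cancel₀ _ (Set.mem_Ioi.1 hy).ne']
end

section
/- Let M ≥ 0 and let g : (0,1] → ℝ be differentiable with |g'(z)| ≤ M·z for all z ∈ (0,1]. Then g extends continuously to [0,1], the integral ∫₀¹ g'(z)/z dz converges absolutely, and lim_{y→0⁺} ( g(y)/y + ∫₁^y g(z)/z² dz ) = g(1) − ∫₀¹ g'(z)/z dz. -/
open Filter MeasureTheory

/-!
The product rule gives `(g z / z)' = g' z / z - g z / z ^ 2`, so integrating over `[y, 1]`,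
`g y / y + ∫₁ʸ g z / z ^ 2 = g 1 - ∫_y^1 g' z / z` exactly, for every `0 < y ≤ 1`.
Since `g' z / z` is bounded by `M` it is integrable on `(0, 1]`, and the limit `y → 0⁺` is
continuity of the primitive (`tendsto_integral_left_zero`). The same continuity applied to
`g y = g 1 - ∫_y^1 g'` yields the extension of `g` to `0`.
-/

/-- A bounded measurable function on `(0, 1]` is integrable there. -/
lemma integrableOn_Ioc_of_abs_le {f : ℝ → ℝ} (hf : Measurable f) (C : ℝ)
    (h : ∀ z ∈ Set.Ioc (0:ℝ) 1, |f z| ≤ C) : IntegrableOn f (Set.Ioc 0 1) volume := by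
  refine Measure.integrableOn_of_bounded (M := C) (by simp) hf.aestronglyMeasurable ?_
  exact (ae_restrict_iff' measurableSet_Ioc).2 (Eventually.of_forall h)

lemma tendsto_integral_left_zero {f : ℝ → ℝ} (hf : IntegrableOn f (Set.Ioc 0 1) volume) :
    Tendsto (fun y => ∫ z in y..(1:ℝ), f z) (nhdsWithin 0 (Set.Ioi 0))
      (nhds (∫ z in Set.Ioc (0:ℝ) 1, f z)) := by
  rw [← intervalIntegral.integral_of_le zero_le_one]
  have hc : ContinuousOn (fun y => ∫ z in y..(1:ℝ), f z) (Set.uIcc 0 1) := by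
    apply intervalIntegral.continuousOn_primitive_interval_left
    rwa [Set.uIcc_of_le zero_le_one, integrableOn_Icc_iff_integrableOn_Ioc]
  have h0 := hc 0 Set.left_mem_uIcc
  rw [Set.uIcc_of_le zero_le_one] at h0
  exact h0.mono_left <| nhdsWithin_le_of_mem <| Icc_mem_nhdsGT zero_lt_one

theorem integral_asymptotic (M : ℝ) (hM : 0 ≤ M) (g : ℝ → ℝ)
    (hg : ∀ z ∈ Set.Ioc (0:ℝ) 1, DifferentiableAt ℝ g z)
    (hg' : ∀ z ∈ Set.Ioc (0:ℝ) 1, |deriv g z| ≤ M * z) :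
    (∃ g0 : ℝ, Tendsto g (nhdsWithin 0 (Set.Ioi 0)) (nhds g0)) ∧
    IntegrableOn (fun z => deriv g z / z) (Set.Ioc 0 1) volume ∧
    Tendsto (fun y => g y / y + ∫ z in (1:ℝ)..y, g z / z ^ 2)
      (nhdsWithin 0 (Set.Ioi 0))
      (nhds (g 1 - ∫ z in Set.Ioc (0:ℝ) 1, deriv g z / z)) := by
  have hint' : IntegrableOn (deriv g) (Set.Ioc 0 1) volume :=
    integrableOn_Ioc_of_abs_le (measurable_deriv g) M fun z hz =>
      (hg' z hz).trans (mul_le_of_le_one_right hM hz.2)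
  have hint : IntegrableOn (fun z => deriv g z / z) (Set.Ioc 0 1) volume := by
    refine integrableOn_Ioc_of_abs_le ((measurable_deriv g).div measurable_id) M fun z hz => ?_
    rw [abs_div, abs_of_pos hz.1, div_le_iff₀ hz.1]
    exact hg' z hz
  have hnear : ∀ᶠ y in nhdsWithin (0:ℝ) (Set.Ioi 0), y ∈ Set.Ioc (0:ℝ) 1 :=
    Ioc_mem_nhdsGT zero_lt_one
  have hmem : ∀ y ∈ Set.Ioc (0:ℝ) 1, ∀ z ∈ Set.uIcc y 1, z ∈ Set.Ioc (0:ℝ) 1 := by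
    intro y hy z hz
    rw [Set.uIcc_of_le hy.2] at hz
    exact ⟨hy.1.trans_le hz.1, hz.2⟩
  have hii : ∀ {f : ℝ → ℝ}, IntegrableOn f (Set.Ioc 0 1) volume →
      ∀ y ∈ Set.Ioc (0:ℝ) 1, IntervalIntegrable f volume y 1 := by
    intro f hf y hy
    rw [intervalIntegrable_iff_integrableOn_Ioc_of_le hy.2]
    exact hf.mono_set (Set.Ioc_subset_Ioc_left hy.1.le)
  refine ⟨⟨_, ((tendsto_integral_left_zero hint').const_sub (g 1)).congr' ?_⟩, hint,
    ((tendsto_integral_left_zero hint).const_sub (g 1)).congr' ?_⟩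
  · filter_upwards [hnear] with y hy
    rw [intervalIntegral.integral_eq_sub_of_hasDerivAt
      (fun z hz => (hg z (hmem y hy z hz)).hasDerivAt) (hii hint' y hy)]
    ring
  · filter_upwards [hnear] with y hy
    have hq : IntervalIntegrable (fun z => g z / z ^ 2) volume y 1 := by
      apply ContinuousOn.intervalIntegrable
      intro z hz
      have hz' := hmem y hy z hz
      exact ((hg z hz').continuousAt.div (continuousAt_id.pow 2)
        (pow_ne_zero 2 hz'.1.ne')).continuousWithinAt
    have hd : ∀ z ∈ Set.uIcc y 1,
        HasDerivAt (fun z => g z / z) (deriv g z / z - g z / z ^ 2) z := by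
      intro z hz
      have hz' := hmem y hy z hz
      have hz0 : z ≠ 0 := hz'.1.ne'
      refine ((hg z hz').hasDerivAt.div (hasDerivAt_id z) hz0).congr_deriv ?_
      simp only [id]
      field_simp
    have key := intervalIntegral.integral_eq_sub_of_hasDerivAt hd ((hii hint y hy).sub hq)
    rw [intervalIntegral.integral_sub (hii hint y hy) hq, div_one] at key
    rw [intervalIntegral.integral_symm y 1]
    linarith
end

section
/- Let ū : [1,∞) → ℝ be continuous with ū > 0 and lim_{y→∞} ū(y) = u∞ for some u∞ ∈ (0,∞), let v̄ : [1,∞) → ℝ be locally integrable, and let c > 0 satisfy ∫₁^∞ |v̄(z) − c| dz < ∞. Then the limit lim_{y→∞} e^{−cy}·ū(y)·∫₁^y (ū(1)²/ū(z)²)·exp(∫₁^z v̄(w) dw) dz exists and is a (finite) positive real number. -/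
/-!
Since `v̄ - c` is integrable, `∫₁ᶻ v̄ = c (z - 1) + ∫₁ᶻ (v̄ - c)`, so the integrand equals
`e^{cz} G(z)` on `[1, ∞)`, where `G` is continuous and tends to
`L = (ū(1)² / u∞²) exp(∫₁^∞ (v̄ - c) - c) > 0`. The substitution `s = y - z` gives
`e^{-cy} ∫₁ʸ e^{cz} G(z) dz = ∫₀^{y-1} e^{-cs} G(y - s) ds`, and because `G` is bounded this tends
to `L ∫₀^∞ e^{-cs} ds = L / c` by dominated convergence (`tendsto_exp_average`). The limit sought
is therefore `A = u∞ L / c`.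
-/

open Filter MeasureTheory

/-- A continuous function with a limit at `+∞` that is constant on `(-∞, 1]` is bounded. -/
lemma exists_bound_of_tendsto_atTop {G : ℝ → ℝ} {L : ℝ} (hG : Continuous G)
    (hL : Tendsto G atTop (nhds L)) (hconst : ∀ x ≤ 1, G x = G 1) :
    ∃ M, ∀ x, |G x| ≤ M := by
  obtain ⟨N, hN⟩ := eventually_atTop.1 (hL.abs.eventually (gt_mem_nhds (lt_add_one |L|)))
  obtain ⟨B, hB⟩ := (isCompact_Icc (a := (1:ℝ)) (b := max 1 N)).exists_bound_of_continuousOn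
    hG.continuousOn
  refine ⟨max B (|L| + 1), fun x => ?_⟩
  rcases le_total x 1 with h1 | h1
  · rw [hconst x h1]
    exact (hB 1 ⟨le_rfl, le_max_left _ _⟩).trans (le_max_left _ _)
  · rcases le_total x N with h2 | h2
    · exact (hB x ⟨h1, h2.trans (le_max_right _ _)⟩).trans (le_max_left _ _)
    · exact (hN x h2).le.trans (le_max_right _ _)

/-- The exponentially weighted averages of a bounded continuous function with limit `L` at `+∞`
tend to `L / c`. -/
lemma tendsto_exp_average {G : ℝ → ℝ} {L M c : ℝ} (hc : 0 < c) (hG : Continuous G)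
    (hL : Tendsto G atTop (nhds L)) (hM : ∀ x, |G x| ≤ M) :
    Tendsto (fun y => Real.exp (-(c * y)) * ∫ z in (1:ℝ)..y, Real.exp (c * z) * G z)
      atTop (nhds (L / c)) := by
  have hexp : IntegrableOn (fun s : ℝ => Real.exp (-c * s)) (Set.Ioi 0) :=
    exp_neg_integrableOn_Ioi 0 hc
  have hlim : ∫ s in Set.Ioi (0:ℝ), Real.exp (-c * s) * L = L / c := by
    rw [integral_mul_const, integral_exp_mul_Ioi (by linarith : -c < 0) 0]
    simp
    field_simp
  have key : Tendsto (fun y => ∫ s in Set.Ioi (0:ℝ),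
      (Set.Ioc 0 (y - 1)).indicator (fun s => Real.exp (-c * s) * G (y - s)) s)
      atTop (nhds (∫ s in Set.Ioi (0:ℝ), Real.exp (-c * s) * L)) := by
    refine tendsto_integral_filter_of_dominated_convergence
      (fun s => Real.exp (-c * s) * M) ?_ ?_ (hexp.mul_const M) ?_
    · refine Eventually.of_forall fun y => ?_
      exact (Continuous.aestronglyMeasurable (by fun_prop)).indicator measurableSet_Ioc
    · refine Eventually.of_forall fun y => ae_of_all _ fun s => ?_
      refine (norm_indicator_le_norm_self _ _).trans ?_
      rw [norm_mul, Real.norm_eq_abs, Real.norm_eq_abs, Real.abs_exp]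
      exact mul_le_mul_of_nonneg_left (hM _) (Real.exp_pos _).le
    · refine (ae_restrict_iff' measurableSet_Ioi).2 (ae_of_all _ fun s hs => ?_)
      have h1 : Tendsto (fun y => Real.exp (-c * s) * G (y - s)) atTop
          (nhds (Real.exp (-c * s) * L)) :=
        (hL.comp (tendsto_atTop_add_const_right _ (-s) tendsto_id)).const_mul _
      refine h1.congr' ?_
      filter_upwards [eventually_ge_atTop (s + 1)] with y hy
      rw [Set.indicator_of_mem]
      exact ⟨hs, by linarith⟩
  rw [hlim] at key
  refine key.congr' ?_
  filter_upwards [eventually_ge_atTop (1:ℝ)] with y hy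
  rw [setIntegral_indicator measurableSet_Ioc,
    Set.inter_eq_right.2 Set.Ioc_subset_Ioi_self,
    ← intervalIntegral.integral_of_le (by linarith), ← intervalIntegral.integral_const_mul]
  have h := intervalIntegral.integral_comp_sub_left (a := 0) (b := y - 1)
    (fun z => Real.exp (-(c * y)) * (Real.exp (c * z) * G z)) y
  rw [sub_sub_cancel, sub_zero] at h
  rw [← h]
  refine intervalIntegral.integral_congr fun s _ => ?_
  rw [← mul_assoc, ← Real.exp_add]
  ring_nf

/-- Growth asymptotic of `ũ_s` at infinity: if `ū` is continuous, positive, and tends to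
`u∞ ∈ (0,∞)` on `[1,∞)`, `v̄` is locally integrable there, and `∫₁^∞ |v̄ − c| < ∞` for
some `c > 0`, then `e^{−cy} ū(y) ∫₁ʸ (ū(1)²/ū(z)²) exp(∫₁ᶻ v̄) dz` converges, as
`y → ∞`, to a finite positive limit. -/
theorem uts_growth_asymptotic (ub vb : ℝ → ℝ) (uinf c : ℝ)
    (hub_cont : ContinuousOn ub (Set.Ici 1))
    (hub_pos : ∀ y ∈ Set.Ici (1:ℝ), 0 < ub y)
    (hub_lim : Tendsto ub atTop (nhds uinf))
    (huinf : 0 < uinf)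
    (hvb : LocallyIntegrableOn vb (Set.Ici 1) volume)
    (hc : 0 < c)
    (hint : IntegrableOn (fun z => |vb z - c|) (Set.Ici 1) volume) :
    ∃ A : ℝ, 0 < A ∧
      Tendsto (fun y => Real.exp (-(c * y)) * ub y *
          ∫ z in (1:ℝ)..y, (ub 1) ^ 2 / (ub z) ^ 2 * Real.exp (∫ w in (1:ℝ)..z, vb w))
        atTop (nhds A) := by
  have hvc : IntegrableOn (fun z => vb z - c) (Set.Ici 1) volume :=
    (integrable_norm_iff (hvb.aestronglyMeasurable.sub aestronglyMeasurable_const)).1 hint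
  -- Cutting `v̄ - c` off below `1` makes its primitive continuous on all of `ℝ`.
  set h : ℝ → ℝ := (Set.Ici 1).indicator (fun z => vb z - c) with hh
  have hhint : Integrable h volume := hvc.integrable_indicator measurableSet_Ici
  set H : ℝ → ℝ := fun z => ∫ w in (1:ℝ)..z, h w with hH
  have hHcont : Continuous H :=
    intervalIntegral.continuous_primitive (fun _ _ => hhint.intervalIntegrable) 1
  have hHlim : Tendsto H atTop (nhds (∫ w in Set.Ioi (1:ℝ), h w)) :=
    intervalIntegral_tendsto_integral_Ioi 1 hhint.integrableOn tendsto_id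
  have hprim : ∀ z, 1 ≤ z → ∫ w in (1:ℝ)..z, vb w = c * z + (H z - c) := by
    intro z hz
    have h1 : H z = ∫ w in (1:ℝ)..z, (vb w - c) := by
      refine intervalIntegral.integral_congr fun w hw => ?_
      rw [Set.uIcc_of_le hz] at hw
      exact Set.indicator_of_mem (show w ∈ Set.Ici (1:ℝ) from hw.1) _
    have h2 : IntervalIntegrable vb volume 1 z := by
      rw [intervalIntegrable_iff_integrableOn_Icc_of_le hz]
      exact hvb.integrableOn_compact_subset Set.Icc_subset_Ici_self isCompact_Icc
    rw [h1, intervalIntegral.integral_sub h2 intervalIntegrable_const,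
      intervalIntegral.integral_const, smul_eq_mul]
    ring
  have hub1 : 0 < ub 1 := hub_pos 1 Set.self_mem_Ici
  have hucont : Continuous fun z => ub (max 1 z) :=
    hub_cont.comp_continuous (by fun_prop) fun z =>
      Set.mem_Ici.2 (le_max_left _ _)
  have hupos : ∀ z, ub (max 1 z) ≠ 0 := fun z => (hub_pos _ (Set.mem_Ici.2 (le_max_left _ _))).ne'
  set G : ℝ → ℝ := fun z => ub 1 ^ 2 / ub (max 1 z) ^ 2 * Real.exp (H (max 1 z) - c) with hG
  have hGcont : Continuous G := by
    refine (continuous_const.div (hucont.pow 2) fun z => pow_ne_zero 2 (hupos z)).mul ?_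
    fun_prop
  set L : ℝ := ub 1 ^ 2 / uinf ^ 2 * Real.exp ((∫ w in Set.Ioi (1:ℝ), h w) - c) with hLdef
  have hGlim : Tendsto G atTop (nhds L) := by
    have hlim : Tendsto (fun z => ub 1 ^ 2 / ub z ^ 2 * Real.exp (H z - c)) atTop (nhds L) :=
      (tendsto_const_nhds.div (hub_lim.pow 2) (pow_ne_zero 2 huinf.ne')).mul
        ((Real.continuous_exp.tendsto _).comp (hHlim.sub_const c))
    refine hlim.congr' ?_
    filter_upwards [eventually_ge_atTop (1:ℝ)] with z hz
    simp only [hG, max_eq_right hz]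
  obtain ⟨M, hM⟩ := exists_bound_of_tendsto_atTop hGcont hGlim fun x hx => by
    simp only [hG, max_eq_left hx, max_self]
  refine ⟨uinf * (L / c), by positivity, ?_⟩
  refine (hub_lim.mul (tendsto_exp_average hc hGcont hGlim hM)).congr' ?_
  filter_upwards [eventually_ge_atTop (1:ℝ)] with y hy
  have hI : ∫ z in (1:ℝ)..y, ub 1 ^ 2 / ub z ^ 2 * Real.exp (∫ w in (1:ℝ)..z, vb w) =
      ∫ z in (1:ℝ)..y, Real.exp (c * z) * G z := by
    refine intervalIntegral.integral_congr fun z hz => ?_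
    rw [Set.uIcc_of_le hy] at hz
    simp only [hG, max_eq_right hz.1]
    rw [hprim z hz.1, Real.exp_add]
    ring
  rw [hI]
  ring
end

section
/- Let ū : [0,∞) → ℝ be four times continuously differentiable and let q : [0,∞) → ℝ be twice continuously differentiable with compact support and q(0) = 0. Then ∫₀^∞ (ū·q)''(y)·q''(y) dy = ∫₀^∞ ū·(q'')² dy − ū'(0)·q'(0)² − 2·∫₀^∞ ū''·(q')² dy + (1/2)·∫₀^∞ ū''''·q² dy, where primes denote derivatives in y. -/
open MeasureTheory

/-!
Expanding `(ū q)''` by the Leibniz rule, the difference of the two integrands is the exact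
derivative of `F = ū' (q')² + ū'' q q' - ½ ū''' q²` on `[0, ∞)`. Since `q` has compact support,
`F` vanishes near infinity, and `F 0 = ū'(0) q'(0)²` because `q 0 = 0`; the fundamental theorem of
calculus on `(0, ∞)` then gives the identity. Each integrand is integrable, being continuous on
`[0, ∞)` and zero off the support of `q`.
-/

lemma integrableOn_Ioi_of_continuousOn_of_compact {K : Set ℝ} (hK : IsCompact K) {g : ℝ → ℝ}
    (hg : ContinuousOn g (Set.Ici 0)) (h0 : ∀ y ∉ K, g y = 0) :
    IntegrableOn g (Set.Ioi 0) := by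
  have h1 : IntegrableOn g (K ∩ Set.Ici 0) :=
    (hg.mono Set.inter_subset_right).integrableOn_compact (hK.inter_right isClosed_Ici)
  refine h1.of_forall_sdiff_eq_zero measurableSet_Ioi ?_
  rintro y ⟨hy, hy'⟩
  exact h0 y fun hyK => hy' ⟨hyK, Set.Ioi_subset_Ici_self hy⟩

/-- Integrated form of a pointwise identity `F' = a - b + 2 c - d / 2` on `[0, ∞)`, where
`F` and the four integrands vanish off a compact set. -/
lemma integral_identity_of_hasDerivAt {K : Set ℝ} (hK : IsCompact K) {F a b c d : ℝ → ℝ}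
    (hF : ∀ y ∈ Set.Ici (0 : ℝ), HasDerivAt F (a y - b y + 2 * c y - 1 / 2 * d y) y)
    (hF0 : ∀ y ∉ K, F y = 0)
    (ha : IntegrableOn a (Set.Ioi 0)) (hb : IntegrableOn b (Set.Ioi 0))
    (hc : IntegrableOn c (Set.Ioi 0)) (hd : IntegrableOn d (Set.Ioi 0)) :
    ∫ y in Set.Ioi (0 : ℝ), a y = (∫ y in Set.Ioi (0 : ℝ), b y) - F 0
      - 2 * (∫ y in Set.Ioi (0 : ℝ), c y) + (1 / 2) * ∫ y in Set.Ioi (0 : ℝ), d y := by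
  have hlim : Filter.Tendsto F Filter.atTop (nhds 0) := by
    refine tendsto_const_nhds.congr' ?_
    filter_upwards [atTop_le_cocompact hK.compl_mem_cocompact] with y hy
    exact (hF0 y hy).symm
  have hc2 := hc.const_mul 2
  have hd2 := hd.const_mul (1 / 2)
  have h := integral_Ioi_of_hasDerivAt_of_tendsto' hF (((ha.sub hb).add hc2).sub hd2) hlim
  have e1 := integral_sub ((ha.sub hb).add hc2) hd2
  have e2 := integral_add (ha.sub hb) hc2
  have e3 := integral_sub ha hb
  simp only [Pi.add_apply, Pi.sub_apply] at e1 e2 e3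
  rw [e1, e2, e3, integral_const_mul, integral_const_mul] at h
  linarith

/-- Integration-by-parts identity behind the Galerkin energy estimate: for `ū ∈ C⁴`
up to the boundary `y = 0` (encoded by smoothness on an open neighbourhood `U` of
`[0,∞)`) and `q ∈ C²` with compact support and `q(0) = 0`,
`∫₀^∞ (ū q)'' q'' = ∫₀^∞ ū (q'')² − ū'(0) q'(0)² − 2 ∫₀^∞ ū'' (q')² + (1/2) ∫₀^∞ ū'''' q²`. -/
theorem galerkin_energy_identity (U : Set ℝ) (hU : IsOpen U) (hU2 : Set.Ici (0:ℝ) ⊆ U)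
    (ub q : ℝ → ℝ)
    (hub : ContDiffOn ℝ 4 ub U)
    (hq : ContDiffOn ℝ 2 q U)
    (hqsupp : HasCompactSupport q)
    (hq0 : q 0 = 0) :
    ∫ y in Set.Ioi (0:ℝ), deriv (deriv (fun t => ub t * q t)) y * deriv (deriv q) y
      = (∫ y in Set.Ioi (0:ℝ), ub y * (deriv (deriv q) y) ^ 2)
        - deriv ub 0 * (deriv q 0) ^ 2
        - 2 * (∫ y in Set.Ioi (0:ℝ), deriv (deriv ub) y * (deriv q y) ^ 2)
        + (1 / 2) * ∫ y in Set.Ioi (0:ℝ), deriv (deriv (deriv (deriv ub))) y * (q y) ^ 2 := by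
  have hub1 : ContDiffOn ℝ 3 (deriv ub) U := hub.deriv_of_isOpen hU (by norm_num)
  have hub2 : ContDiffOn ℝ 2 (deriv (deriv ub)) U := hub1.deriv_of_isOpen hU (by norm_num)
  have hub3 : ContDiffOn ℝ 1 (deriv (deriv (deriv ub))) U :=
    hub2.deriv_of_isOpen hU (by norm_num)
  have hub4 : ContDiffOn ℝ 0 (deriv (deriv (deriv (deriv ub)))) U :=
    hub3.deriv_of_isOpen hU (by norm_num)
  have hq1 : ContDiffOn ℝ 1 (deriv q) U := hq.deriv_of_isOpen hU (by norm_num)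
  have hq2 : ContDiffOn ℝ 0 (deriv (deriv q)) U := hq1.deriv_of_isOpen hU (by norm_num)
  have D : ∀ {n : WithTop ℕ∞} {f : ℝ → ℝ}, ContDiffOn ℝ n f U → n ≠ 0 →
      ∀ y ∈ U, HasDerivAt f (deriv f y) y := fun hf hn y hy =>
    ((hf.differentiableOn hn).differentiableAt (hU.mem_nhds hy)).hasDerivAt
  have du := D hub (by norm_num)
  have du1 := D hub1 (by norm_num)
  have du2 := D hub2 (by norm_num)
  have du3 := D hub3 (by norm_num)
  have dq := D hq (by norm_num)
  have dq1 := D hq1 (by norm_num)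
  have leibniz : ∀ y ∈ U, deriv (deriv (fun t => ub t * q t)) y
      = deriv (deriv ub) y * q y + 2 * (deriv ub y * deriv q y) + ub y * deriv (deriv q) y := by
    intro y hy
    have h1 : deriv (fun t => ub t * q t) =ᶠ[nhds y]
        fun t => deriv ub t * q t + ub t * deriv q t := by
      filter_upwards [hU.mem_nhds hy] with t ht
      exact ((du t ht).mul (dq t ht)).deriv
    rw [h1.deriv_eq]
    refine ((((du1 y hy).mul (dq y hy)).add ((du y hy).mul (dq1 y hy))).congr_deriv ?_).deriv
    ring
  have z0 : ∀ y ∉ tsupport q, q y = 0 := fun y hy => image_eq_zero_of_notMem_tsupport hy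
  have z1 : ∀ y ∉ tsupport q, deriv q y = 0 := fun y hy =>
    image_eq_zero_of_notMem_tsupport fun h => hy (tsupport_deriv_subset h)
  have z2 : ∀ y ∉ tsupport q, deriv (deriv q) y = 0 := fun y hy =>
    image_eq_zero_of_notMem_tsupport fun h =>
      hy (tsupport_deriv_subset (tsupport_deriv_subset h))
  have cu := hub.continuousOn.mono hU2
  have cu1 := hub1.continuousOn.mono hU2
  have cu2 := hub2.continuousOn.mono hU2
  have cu4 := hub4.continuousOn.mono hU2
  have cq := hq.continuousOn.mono hU2
  have cq1 := hq1.continuousOn.mono hU2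
  have cq2 := hq2.continuousOn.mono hU2
  have key := integral_identity_of_hasDerivAt hqsupp.isCompact
    (F := fun y => deriv ub y * deriv q y ^ 2 + deriv (deriv ub) y * (q y * deriv q y)
      - 1 / 2 * (deriv (deriv (deriv ub)) y * q y ^ 2))
    (a := fun y => deriv (deriv (fun t => ub t * q t)) y * deriv (deriv q) y)
    (b := fun y => ub y * (deriv (deriv q) y) ^ 2)
    (c := fun y => deriv (deriv ub) y * (deriv q y) ^ 2)
    (d := fun y => deriv (deriv (deriv (deriv ub))) y * (q y) ^ 2)
    ?_ ?_ ?_ ?_ ?_ ?_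
  · simpa [hq0] using key
  · intro y hy
    have hy := hU2 hy
    refine ((((du1 y hy).mul ((dq1 y hy).pow 2)).add
      ((du2 y hy).mul ((dq y hy).mul (dq1 y hy)))).sub
      (((du3 y hy).mul ((dq y hy).pow 2)).const_mul (1 / 2))).congr_deriv ?_
    simp only [leibniz y hy, Pi.mul_apply, Pi.pow_apply]
    push_cast
    ring
  · intro y hy
    simp [z0 y hy, z1 y hy]
  · refine integrableOn_Ioi_of_continuousOn_of_compact hqsupp.isCompact ?_ ?_
    · have : ContinuousOn (fun y => (deriv (deriv ub) y * q y + 2 * (deriv ub y * deriv q y)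
          + ub y * deriv (deriv q) y) * deriv (deriv q) y) (Set.Ici 0) := by fun_prop
      exact this.congr fun y hy => by simp only [leibniz y (hU2 hy)]
    · intro y hy
      simp [z2 y hy]
  · refine integrableOn_Ioi_of_continuousOn_of_compact hqsupp.isCompact (by fun_prop) ?_
    intro y hy
    simp [z2 y hy]
  · refine integrableOn_Ioi_of_continuousOn_of_compact hqsupp.isCompact (by fun_prop) ?_
    intro y hy
    simp [z1 y hy]
  · refine integrableOn_Ioi_of_continuousOn_of_compact hqsupp.isCompact (by fun_prop) ?_
    intro y hy
    simp [z0 y hy]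
end
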